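/- arXiv:2506.07694 — 4 statements merged into one kernel-verified Lean document; each statement's English description precedes it below -/
import Mathlib

section
/- Integration by parts: if u ∈ W^{s,p}(V), then for every finitely supported φ : V → ℝ, ∫_V φ · (−Δ)ₚˢu dμ = ∫_V |∇ˢu|^{p−2} ∇ˢu∇ˢφ dμ. -/
open Filter
open scoped BigOperators

noncomputable section

namespace FSG

variable {V : Type*}

/-- The fractional Dirichlet pairing `∇ˢu∇ˢv(x)`. -/
def gradPair (μ : V → ℝ) (W : V → V → ℝ) (u v : V → ℝ) (x : V) : ℝ :=
  (1 / (2 * μ x)) * ∑' y, W x y * (u x - u y) * (v x - v y)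

/-- The length of the fractional gradient `|∇ˢu|(x)`. -/
def gradNorm (μ : V → ℝ) (W : V → V → ℝ) (u : V → ℝ) (x : V) : ℝ :=
  Real.sqrt (gradPair μ W u u x)

/-- Boundedness of a real function on `V`. -/
def Bdd (u : V → ℝ) : Prop := ∃ C : ℝ, ∀ x, |u x| ≤ C

/-- Membership in the fractional Sobolev space `W^{s,p}(V)`. -/
def memW (μ : V → ℝ) (W : V → V → ℝ) (p : ℝ) (u : V → ℝ) : Prop :=
  Bdd u ∧ Summable (fun x => μ x * (gradNorm μ W u x ^ p + |u x| ^ p))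

/-- The `W^{s,p}(V)` norm. -/
def normW (μ : V → ℝ) (W : V → V → ℝ) (p : ℝ) (u : V → ℝ) : ℝ :=
  (∑' x, μ x * (gradNorm μ W u x ^ p + |u x| ^ p)) ^ (1 / p)

/-- Membership in `W₀^{s,p}(V)`, the closure of the finitely supported functions. -/
def memW0 (μ : V → ℝ) (W : V → V → ℝ) (p : ℝ) (u : V → ℝ) : Prop :=
  Bdd u ∧ ∃ v : ℕ → V → ℝ, (∀ n, (Function.support (v n)).Finite) ∧
    Tendsto (fun n => normW μ W p (v n - u)) atTop (nhds 0)

/-- The fractional `p`-Laplacian `(−Δ)ₚˢu(x)`. -/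
def pLap (μ : V → ℝ) (W : V → V → ℝ) (p : ℝ) (u : V → ℝ) (x : V) : ℝ :=
  (1 / (2 * μ x)) *
    ∑' y, W x y * (gradNorm μ W u x ^ (p - 2) + gradNorm μ W u y ^ (p - 2)) * (u x - u y)

/-- The norm `‖u‖_H` of the space `H_{s,p}(V)`. -/
def normH (μ : V → ℝ) (W : V → V → ℝ) (h : V → ℝ) (p : ℝ) (u : V → ℝ) : ℝ :=
  (∑' x, μ x * (gradNorm μ W u x ^ p + h x * |u x| ^ p)) ^ (1 / p)

/-- Membership in `H_{s,p}(V)`, the completion of `C_c(V)` under `‖·‖_H`,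
realized as a function space. -/
def memH (μ : V → ℝ) (W : V → V → ℝ) (h : V → ℝ) (p : ℝ) (u : V → ℝ) : Prop :=
  Bdd u ∧ ∃ v : ℕ → V → ℝ, (∀ n, (Function.support (v n)).Finite) ∧
    Tendsto (fun n => normH μ W h p (v n - u)) atTop (nhds 0)

/-- The primitive `F(x,y) = ∫₀^y f(x,t) dt`. -/
def Fint (f : V → ℝ → ℝ) (x : V) (y : ℝ) : ℝ := ∫ t in (0:ℝ)..y, f x t

/-- The energy functional `E(u)`. -/
def energy (μ : V → ℝ) (W : V → V → ℝ) (h : V → ℝ) (p : ℝ) (f : V → ℝ → ℝ)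
    (u : V → ℝ) : ℝ :=
  (1 / p) * (∑' x, μ x * (gradNorm μ W u x ^ p + h x * |u x| ^ p))
    - ∑' x, μ x * Fint f x (max (u x) 0)

/-- The pairing `⟨E′(u),φ⟩`. -/
def Epair (μ : V → ℝ) (W : V → V → ℝ) (h : V → ℝ) (p : ℝ) (f : V → ℝ → ℝ)
    (u φ : V → ℝ) : ℝ :=
  (∑' x, μ x * (gradNorm μ W u x ^ (p - 2) * gradPair μ W u φ x
      + h x * |u x| ^ (p - 2) * u x * φ x))
    - ∑' x, μ x * f x (max (u x) 0) * φ x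

/-- The first eigenvalue `λ_p`. -/
def lambdaP (μ : V → ℝ) (W : V → V → ℝ) (h : V → ℝ) (p : ℝ) : ℝ :=
  sInf {r : ℝ | ∃ u : V → ℝ, memH μ W h p u ∧ u ≠ 0 ∧
    r = (∑' x, μ x * (gradNorm μ W u x ^ p + h x * |u x| ^ p)) /
        (∑' x, μ x * |u x| ^ p)}

/-- The Nehari manifold `N`. -/
def memN (μ : V → ℝ) (W : V → V → ℝ) (h : V → ℝ) (p : ℝ) (f : V → ℝ → ℝ)
    (u : V → ℝ) : Prop :=
  memH μ W h p u ∧ u ≠ 0 ∧ Epair μ W h p f u u = 0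

/-- The Nehari infimum `e_{s,p}`. -/
def espInf (μ : V → ℝ) (W : V → V → ℝ) (h : V → ℝ) (p : ℝ) (f : V → ℝ → ℝ) : ℝ :=
  sInf {r : ℝ | ∃ u : V → ℝ, memN μ W h p f u ∧ r = energy μ W h p f u}

/-!
Split the `p`-Laplacian into the flux `J(x, y) = |∇ˢu|^{p-2}(x) W(x, y) (u(x) - u(y))` and its
reverse: by symmetry of `W`, `2 μ(x) (-Δ)ₚˢu(x) = ∑ y, (J(x, y) - J(y, x))`, while
`2 μ(x) |∇ˢu|^{p-2} ∇ˢu∇ˢφ(x) = ∑ y, J(x, y) (φ(x) - φ(y))`. Summation by parts therefore gives the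
identity as soon as `J` is summable in each variable, which follows from the boundedness of `u` and
`|∇ˢu|`; the latter is where a lower bound on `μ` enters.
-/

theorem hasSum_tsum_mul_of_finite_support {ι κ R : Type*} [NonUnitalNonAssocSemiring R]
    [TopologicalSpace R] [IsTopologicalSemiring R] {J : ι → κ → R} {φ : κ → R}
    (hJ : ∀ y, Summable fun x => J x y) (hφ : φ.support.Finite) :
    HasSum (fun x => ∑' y, J x y * φ y) (∑' y, (∑' x, J x y) * φ y) := by
  have hfinite (a : κ → R) : ∑' y, a y * φ y = ∑ y ∈ hφ.toFinset, a y * φ y :=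
    tsum_eq_sum fun y hy => by
      rw [Function.notMem_support.mp (mt hφ.mem_toFinset.mpr hy), mul_zero]
  simp only [hfinite]
  exact hasSum_sum fun y _ => (hJ y).hasSum.mul_right (φ y)

theorem tsum_tsum_mul_sub_eq_tsum_tsum_sub_mul {ι R : Type*} [NonUnitalNonAssocRing R]
    [TopologicalSpace R] [IsTopologicalRing R] [T2Space R] {J : ι → ι → R} {φ : ι → R}
    (hrow : ∀ x, Summable (J x)) (hcol : ∀ y, Summable fun x => J x y)
    (hφ : φ.support.Finite) :
    ∑' x, ∑' y, J x y * (φ x - φ y) = ∑' x, (∑' y, (J x y - J y x)) * φ x := by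
  have hmul (a : ι → R) : Summable fun x => a x * φ x :=
    summable_of_hasFiniteSupport (hφ.subset (Function.support_mul_subset_right _ _))
  have hswap := hasSum_tsum_mul_of_finite_support hcol hφ
  calc ∑' x, ∑' y, J x y * (φ x - φ y)
      = ∑' x, ((∑' y, J x y) * φ x - ∑' y, J x y * φ y) := by
        refine tsum_congr fun x => ?_
        simp only [mul_sub]
        rw [((hrow x).mul_right _).tsum_sub (hmul _), ((hrow x).hasSum.mul_right _).tsum_eq]
    _ = ∑' x, (∑' y, J x y) * φ x - ∑' x, (∑' y, J y x) * φ x := by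
        rw [(hmul _).tsum_sub hswap.summable, hswap.tsum_eq]
    _ = ∑' x, (∑' y, (J x y - J y x)) * φ x := by
        rw [← (hmul _).tsum_sub (hmul _)]
        exact tsum_congr fun x => by rw [(hrow x).tsum_sub (hcol x), sub_mul]

section Bounded

variable {f w : V → ℝ}

theorem Bdd.sub_const (hf : Bdd f) (c : ℝ) : Bdd fun x => f x - c := by
  obtain ⟨C, hC⟩ := hf
  exact ⟨C + |c|, fun x => (abs_sub _ _).trans (by gcongr; exact hC x)⟩

theorem Bdd.rpow_const (hf : Bdd f) {q : ℝ} (hq : 0 ≤ q) : Bdd fun x => f x ^ q := by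
  obtain ⟨C, hC⟩ := hf
  exact ⟨C ^ q, fun x => (Real.abs_rpow_le_abs_rpow _ _).trans
    (Real.rpow_le_rpow (abs_nonneg _) (hC x) hq)⟩

theorem Bdd.summable_mul (hf : Bdd f) (hw : Summable w) : Summable fun x => f x * w x := by
  obtain ⟨C, hC⟩ := hf
  refine Summable.of_norm_bounded (hw.abs.mul_left C) fun x => ?_
  rw [Real.norm_eq_abs, abs_mul]
  exact mul_le_mul_of_nonneg_right (hC x) (abs_nonneg _)

end Bounded

theorem gradNorm_nonneg (μ : V → ℝ) (W : V → V → ℝ) (u : V → ℝ) (x : V) :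
    0 ≤ gradNorm μ W u x :=
  Real.sqrt_nonneg _

variable {μ : V → ℝ} {W : V → V → ℝ} {p : ℝ} {u φ : V → ℝ}

theorem memW.bdd_gradNorm (hu : memW μ W p u) (hμ : ∃ c > 0, ∀ x, c ≤ μ x) (hp : 0 < p) :
    Bdd (gradNorm μ W u) := by
  obtain ⟨c, hc, hcμ⟩ := hμ
  set density : V → ℝ := fun x => gradNorm μ W u x ^ p + |u x| ^ p
  have hgrad (x : V) : 0 ≤ gradNorm μ W u x ^ p := Real.rpow_nonneg (gradNorm_nonneg μ W u x) p
  have hval (x : V) : 0 ≤ |u x| ^ p := Real.rpow_nonneg (abs_nonneg _) p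
  have hdensity (x : V) : 0 ≤ density x := add_nonneg (hgrad x) (hval x)
  have hterm (x : V) : 0 ≤ μ x * density x := mul_nonneg (hc.le.trans (hcμ x)) (hdensity x)
  set S := ∑' x, μ x * density x
  have hpow (x : V) : gradNorm μ W u x ^ p ≤ S / c := by
    rw [le_div_iff₀' hc]
    calc c * gradNorm μ W u x ^ p
        ≤ μ x * density x :=
          mul_le_mul (hcμ x) (le_add_of_nonneg_right (hval x)) (hgrad x) (hc.le.trans (hcμ x))
      _ ≤ S := hu.2.le_tsum x fun y _ => hterm y
  refine ⟨(S / c) ^ p⁻¹, fun x => ?_⟩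
  rw [abs_of_nonneg (gradNorm_nonneg μ W u x),
    Real.le_rpow_inv_iff_of_pos (gradNorm_nonneg μ W u x) ((hgrad x).trans (hpow x)) hp]
  exact hpow x

/-- The flux of `u` from `x` to `y`: the part of the integrand of the fractional `p`-Laplacian
weighted by the gradient at `x`. The part weighted by the gradient at `y` is the reverse flux, with
a minus sign. -/
def pFlux (μ : V → ℝ) (W : V → V → ℝ) (p : ℝ) (u : V → ℝ) (x y : V) : ℝ :=
  gradNorm μ W u x ^ (p - 2) * (W x y * (u x - u y))

theorem mul_pLap_eq_tsum_pFlux_sub (hW : ∀ x y, W x y = W y x) {x : V} (hμ : μ x ≠ 0) :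
    μ x * pLap μ W p u x = 1 / 2 * ∑' y, (pFlux μ W p u x y - pFlux μ W p u y x) := by
  have hcancel : μ x * (1 / (2 * μ x)) = 1 / 2 := by field_simp
  rw [pLap, ← mul_assoc, hcancel]
  congr 1
  refine tsum_congr fun y => ?_
  rw [pFlux, pFlux, hW y x]
  ring

theorem mul_gradPair_eq_tsum_pFlux_mul_sub {x : V} (hμ : μ x ≠ 0) :
    μ x * (gradNorm μ W u x ^ (p - 2) * gradPair μ W u φ x)
      = 1 / 2 * ∑' y, pFlux μ W p u x y * (φ x - φ y) := by
  have hcancel : μ x * (1 / (2 * μ x)) = 1 / 2 := by field_simp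
  rw [gradPair, mul_left_comm, ← mul_assoc (μ x), hcancel, mul_left_comm, ← tsum_mul_left]
  congr 1
  refine tsum_congr fun y => ?_
  rw [pFlux]
  ring

theorem summable_pFlux_right (hu : Bdd u) {x : V} (hW : Summable (W x)) :
    Summable (pFlux μ W p u x) := by
  refine (((hu.sub_const (u x)).summable_mul hW).mul_left
    (-gradNorm μ W u x ^ (p - 2))).congr fun y => ?_
  rw [pFlux]
  ring

theorem summable_pFlux_left (hu : Bdd u) (hgrad : Bdd fun x => gradNorm μ W u x ^ (p - 2))
    {y : V} (hW : Summable fun x => W x y) : Summable fun x => pFlux μ W p u x y := by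
  refine (hgrad.summable_mul ((hu.sub_const (u y)).summable_mul hW)).congr fun x => ?_
  rw [pFlux, mul_comm (W x y)]

theorem stmt_7_general (hμ : ∃ c > 0, ∀ x, c ≤ μ x) (hWsymm : ∀ x y, W x y = W y x)
    (hWsum : ∀ x, Summable (W x)) (hp : 2 ≤ p) (hu : memW μ W p u) (hφ : φ.support.Finite) :
    ∑' x, μ x * (φ x * pLap μ W p u x)
      = ∑' x, μ x * (gradNorm μ W u x ^ (p - 2) * gradPair μ W u φ x) := by
  have hμ0 : ∀ x, μ x ≠ 0 := by
    obtain ⟨c, hc, hcμ⟩ := hμ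
    exact fun x => (hc.trans_le (hcμ x)).ne'
  have hgrad : Bdd fun x => gradNorm μ W u x ^ (p - 2) :=
    (hu.bdd_gradNorm hμ (by linarith)).rpow_const (by linarith)
  have hrow : ∀ x, Summable (pFlux μ W p u x) := fun x => summable_pFlux_right hu.1 (hWsum x)
  have hcol : ∀ y, Summable fun x => pFlux μ W p u x y := fun y =>
    summable_pFlux_left hu.1 hgrad (by simpa only [hWsymm _ y] using hWsum y)
  calc ∑' x, μ x * (φ x * pLap μ W p u x)
      = ∑' x, 1 / 2 * ((∑' y, (pFlux μ W p u x y - pFlux μ W p u y x)) * φ x) :=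
        tsum_congr fun x => by
          rw [mul_left_comm, mul_pLap_eq_tsum_pFlux_sub hWsymm (hμ0 x)]; ring
    _ = ∑' x, 1 / 2 * ∑' y, pFlux μ W p u x y * (φ x - φ y) := by
        rw [tsum_mul_left, tsum_mul_left, tsum_tsum_mul_sub_eq_tsum_tsum_sub_mul hrow hcol hφ]
    _ = ∑' x, μ x * (gradNorm μ W u x ^ (p - 2) * gradPair μ W u φ x) :=
        tsum_congr fun x => (mul_gradPair_eq_tsum_pFlux_mul_sub (hμ0 x)).symm

/-- integration by parts for the fractional `p`-Laplacian. -/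
theorem stmt_7 {V : Type*} [Countable V] [Infinite V]
    (μ : V → ℝ) (hμpos : ∀ x, 0 < μ x) (hμ0 : ∃ c > 0, ∀ x : V, c ≤ μ x)
    (W : V → V → ℝ) (hWnn : ∀ x y, 0 ≤ W x y) (hWsymm : ∀ x y, W x y = W y x)
    (hWdiag : ∀ x, W x x = 0) (hWsum : ∀ x, Summable (fun y => W x y))
    (p : ℝ) (hp : 2 ≤ p)
    (u : V → ℝ) (hu : memW μ W p u)
    (φ : V → ℝ) (hφ : (Function.support φ).Finite) :
    ∑' x, μ x * (φ x * pLap μ W p u x)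
      = ∑' x, μ x * (gradNorm μ W u x ^ (p - 2) * gradPair μ W u φ x) :=
  stmt_7_general hμ0 hWsymm hWsum hp hu hφ

end FSG
end
end

section
/- For all real numbers a, b with ab ≥ 0, (|a|^{p−2}a − |b|^{p−2}b)(a − b) ≥ |a − b|^p. -/
open Filter
open scoped BigOperators

noncomputable section

namespace FSG

variable {V : Type*}

/-!
If `⟪x, y⟫ ≥ 0`, then both `‖x‖` and `‖y‖` are at most `‖x + y‖`, so that for a nondecreasing
weight `w` the identity
`⟪w(‖x + y‖)(x + y) − w(‖x‖)x, y⟫ = w(‖x + y‖)‖y‖² + (w(‖x + y‖) − w(‖x‖))⟪x, y⟫`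
bounds the left-hand side below by `w(‖y‖)‖y‖²`. The inequality is the case `w(t) = t ^ (p - 2)`,
with `x` the shorter of the vectors `a`, `b` and `x + y` the longer one.
-/

section InnerProductSpace

open Set
open scoped InnerProductSpace

variable {E : Type*} [SeminormedAddCommGroup E] [InnerProductSpace ℝ E]

lemma norm_le_norm_add_of_inner_nonneg {x y : E} (hxy : 0 ≤ ⟪x, y⟫_ℝ) : ‖x‖ ≤ ‖x + y‖ := by
  refine le_of_sq_le_sq ?_ (norm_nonneg _)
  rw [norm_add_sq_real]
  linarith [sq_nonneg ‖y‖]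

lemma mul_norm_sq_le_inner_smul_add_sub_smul {w : ℝ → ℝ} (hw : MonotoneOn w (Ici 0)) {x y : E}
    (hxy : 0 ≤ ⟪x, y⟫_ℝ) :
    w ‖y‖ * ‖y‖ ^ 2 ≤ ⟪w ‖x + y‖ • (x + y) - w ‖x‖ • x, y⟫_ℝ := by
  have hx : w ‖x‖ ≤ w ‖x + y‖ :=
    hw (norm_nonneg x) (norm_nonneg _) (norm_le_norm_add_of_inner_nonneg hxy)
  have hy : w ‖y‖ ≤ w ‖x + y‖ := by
    rw [real_inner_comm] at hxy
    rw [add_comm]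
    exact hw (norm_nonneg y) (norm_nonneg _) (norm_le_norm_add_of_inner_nonneg hxy)
  calc w ‖y‖ * ‖y‖ ^ 2
      ≤ w ‖x + y‖ * ‖y‖ ^ 2 + (w ‖x + y‖ - w ‖x‖) * ⟪x, y⟫_ℝ :=
        le_add_of_le_of_nonneg (by gcongr) (mul_nonneg (sub_nonneg.2 hx) hxy)
    _ = ⟪w ‖x + y‖ • (x + y) - w ‖x‖ • x, y⟫_ℝ := by
        rw [inner_sub_left, real_inner_smul_left, real_inner_smul_left, inner_add_left,
          real_inner_self_eq_norm_sq]
        ring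

lemma mul_norm_sub_sq_le_inner_smul_sub_smul {w : ℝ → ℝ} (hw : MonotoneOn w (Ici 0)) {a b : E}
    (hab : min ‖a‖ ‖b‖ ^ 2 ≤ ⟪a, b⟫_ℝ) :
    w ‖a - b‖ * ‖a - b‖ ^ 2 ≤ ⟪w ‖a‖ • a - w ‖b‖ • b, a - b⟫_ℝ := by
  wlog hba : ‖b‖ ≤ ‖a‖ generalizing a b
  · have hswap := this (a := b) (b := a) (by rwa [min_comm, real_inner_comm]) (le_of_not_ge hba)
    rwa [norm_sub_rev, ← inner_neg_neg, neg_sub, neg_sub] at hswap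
  have hinner : 0 ≤ ⟪b, a - b⟫_ℝ := by
    rw [min_eq_right hba] at hab
    rwa [inner_sub_right, real_inner_self_eq_norm_sq, real_inner_comm, sub_nonneg]
  simpa only [add_sub_cancel] using mul_norm_sq_le_inner_smul_add_sub_smul hw hinner

/-- On the real line the condition on `a` and `b` says `0 ≤ a * b`. In higher dimension
`0 ≤ ⟪a, b⟫` would not suffice when `2 < p`: for orthogonal `a`, `b` the inequality would read
`(‖a‖ ^ 2 + ‖b‖ ^ 2) ^ (p / 2) ≤ ‖a‖ ^ p + ‖b‖ ^ p`. -/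
theorem stmt_10_general {p : ℝ} (hp : 2 ≤ p) {a b : E} (hab : min ‖a‖ ‖b‖ ^ 2 ≤ ⟪a, b⟫_ℝ) :
    ‖a - b‖ ^ p ≤ ⟪‖a‖ ^ (p - 2) • a - ‖b‖ ^ (p - 2) • b, a - b⟫_ℝ := by
  have hp' : 0 ≤ p - 2 := sub_nonneg.2 hp
  calc ‖a - b‖ ^ p = ‖a - b‖ ^ (p - 2) * ‖a - b‖ ^ 2 := by
        rw [← Real.rpow_two, ← Real.rpow_add_of_nonneg (norm_nonneg _) hp' zero_le_two,
          sub_add_cancel]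
    _ ≤ ⟪‖a‖ ^ (p - 2) • a - ‖b‖ ^ (p - 2) • b, a - b⟫_ℝ :=
        mul_norm_sub_sq_le_inner_smul_sub_smul (Real.monotoneOn_rpow_Ici_of_exponent_nonneg hp')
          hab

end InnerProductSpace

lemma min_abs_sq_le_mul_of_mul_nonneg {R : Type*} [CommRing R] [LinearOrder R] [IsOrderedRing R]
    {a b : R} (hab : 0 ≤ a * b) : min |a| |b| ^ 2 ≤ a * b :=
  calc min |a| |b| ^ 2 = min |a| |b| * min |a| |b| := sq _
    _ ≤ |a| * |b| := by
        gcongr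
        exacts [min_le_left _ _, min_le_right _ _]
    _ = a * b := by rw [← abs_mul, abs_of_nonneg hab]

/-- the elementary inequality
`(|a|^{p−2}a − |b|^{p−2}b)(a − b) ≥ |a − b|^p` for `ab ≥ 0`. -/
theorem stmt_10 (p : ℝ) (hp : 2 ≤ p) (a b : ℝ) (hab : 0 ≤ a * b) :
    (|a| ^ (p - 2) * a - |b| ^ (p - 2) * b) * (a - b) ≥ |a - b| ^ p := by
  have hmin : min ‖a‖ ‖b‖ ^ 2 ≤ inner ℝ a b := by
    simpa only [Real.norm_eq_abs, Real.inner_apply] using min_abs_sq_le_mul_of_mul_nonneg hab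
  simpa only [Real.norm_eq_abs, smul_eq_mul, Real.inner_apply] using stmt_10_general hp hmin

end FSG
end
end

section
/- For all vectors a, b in a real inner product space H (for instance ℓ²(ℕ;ℝ)) one has ⟨‖a‖^{p−2}a − ‖b‖^{p−2}b, a − b⟩ ≥ (1/(2^{p−2}p)) ‖a − b‖^p. -/
open Filter
open scoped BigOperators

noncomputable section

namespace FSG

variable {V : Type*}

/-!
Write `d = ‖a - b‖`. The left-hand side is an affine function of `d ^ 2` whose coefficients depend
only on `‖a‖` and `‖b‖`, while `d ^ p = (d ^ 2) ^ (p / 2)` is convex in `d ^ 2`. Since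
`|‖a‖ - ‖b‖| ≤ d ≤ ‖a‖ + ‖b‖`, it is enough to compare the two sides at the endpoints of this
range, where `a` and `b` are collinear: at the lower one the inequality is superadditivity of
`t ↦ t ^ (p - 1)`, at the upper one it is midpoint convexity of `t ↦ t ^ (p - 1)`.
-/

section ScalarInequalities

variable {p r x y : ℝ}

lemma abs_sub_rpow_le_abs_rpow_sub_rpow (hr : 1 ≤ r) (hx : 0 ≤ x) (hy : 0 ≤ y) :
    |x - y| ^ r ≤ |x ^ r - y ^ r| := by
  wlog hyx : y ≤ x generalizing x y
  · simpa only [abs_sub_comm] using this hy hx (le_of_not_ge hyx)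
  have superadditive := Real.add_rpow_le_rpow_add (sub_nonneg.2 hyx) hy hr
  rw [sub_add_cancel] at superadditive
  rw [abs_of_nonneg (sub_nonneg.2 hyx)]
  exact (le_sub_iff_add_le.2 superadditive).trans (le_abs_self _)

lemma abs_sub_rpow_add_one_le (hr : 1 ≤ r) (hx : 0 ≤ x) (hy : 0 ≤ y) :
    |x - y| ^ (r + 1) ≤ (x ^ r - y ^ r) * (x - y) := by
  have monotone : 0 ≤ (x ^ r - y ^ r) * (x - y) := by
    rcases le_total x y with h | h
    · exact mul_nonneg_of_nonpos_of_nonpos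
        (sub_nonpos.2 (Real.rpow_le_rpow hx h (by linarith))) (sub_nonpos.2 h)
    · exact mul_nonneg (sub_nonneg.2 (Real.rpow_le_rpow hy h (by linarith))) (sub_nonneg.2 h)
  calc |x - y| ^ (r + 1) = |x - y| ^ r * |x - y| :=
        Real.rpow_add_one' (abs_nonneg _) (by linarith)
    _ ≤ |x ^ r - y ^ r| * |x - y| := by
        gcongr
        exact abs_sub_rpow_le_abs_rpow_sub_rpow hr hx hy
    _ = (x ^ r - y ^ r) * (x - y) := by rw [← abs_mul, abs_of_nonneg monotone]

lemma add_rpow_le_two_rpow_mul (hr : 1 ≤ r) (hx : 0 ≤ x) (hy : 0 ≤ y) :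
    (x + y) ^ r ≤ 2 ^ (r - 1) * (x ^ r + y ^ r) := by
  lift x to NNReal using hx
  lift y to NNReal using hy
  exact_mod_cast NNReal.rpow_add_le_mul_rpow_add_rpow x y hr

lemma add_rpow_add_one_le (hr : 1 ≤ r) (hx : 0 ≤ x) (hy : 0 ≤ y) :
    (x + y) ^ (r + 1) ≤ 2 ^ (r - 1) * ((x ^ r + y ^ r) * (x + y)) := by
  rw [Real.rpow_add_one' (by positivity) (by linarith), ← mul_assoc]
  gcongr
  exact add_rpow_le_two_rpow_mul hr hx hy

lemma mul_rpow_le_mul_sq_add_of_endpoints {c m k u d v : ℝ} (hp : 2 ≤ p) (hc : 0 ≤ c)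
    (hu : 0 ≤ u) (hud : u ≤ d) (hdv : d ≤ v)
    (h_lower : c * u ^ p ≤ m * u ^ 2 + k) (h_upper : c * v ^ p ≤ m * v ^ 2 + k) :
    c * d ^ p ≤ m * d ^ 2 + k := by
  have hd : 0 ≤ d := hu.trans hud
  have sq_rpow_half {t : ℝ} (ht : 0 ≤ t) : (t ^ 2) ^ (p / 2) = t ^ p := by
    rw [← Real.rpow_natCast_mul ht, Nat.cast_ofNat, mul_div_cancel₀ p two_ne_zero]
  have convex : ConvexOn ℝ (Set.Ici 0) fun s : ℝ ↦ c * s ^ (p / 2) - m * s :=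
    ((convexOn_rpow (by linarith)).smul hc).sub
      ((LinearMap.mulLeft ℝ m).concaveOn (convex_Ici 0))
  have le_max := convex.le_max_of_mem_Icc (sq_nonneg u) (sq_nonneg v)
    (Set.mem_Icc.2 ⟨pow_le_pow_left₀ hu hud 2, pow_le_pow_left₀ hd hdv 2⟩)
  simp only [sq_rpow_half hu, sq_rpow_half hd, sq_rpow_half (hd.trans hdv)] at le_max
  have max_le : max (c * u ^ p - m * u ^ 2) (c * v ^ p - m * v ^ 2) ≤ k :=
    max_le (by linarith) (by linarith)
  linarith

lemma mul_rpow_le_of_abs_sub_le_of_le_add {d : ℝ} (hp : 2 ≤ p) (hx : 0 ≤ x) (hy : 0 ≤ y)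
    (h_lower : |x - y| ≤ d) (h_upper : d ≤ x + y) :
    1 / 2 ^ (p - 2) * d ^ p ≤ (x ^ (p - 2) + y ^ (p - 2)) / 2 * d ^ 2
      + (x ^ (p - 2) - y ^ (p - 2)) * (x ^ 2 - y ^ 2) / 2 := by
  have rpow_sub_one {t : ℝ} (ht : 0 ≤ t) : t ^ (p - 1) = t ^ (p - 2) * t := by
    rw [← Real.rpow_add_one' ht (by linarith)]
    ring_nf
  have hr : 1 ≤ p - 1 := by linarith
  have two_rpow_ge_one : (1 : ℝ) ≤ 2 ^ (p - 2) := Real.one_le_rpow one_le_two (by linarith)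
  refine mul_rpow_le_mul_sq_add_of_endpoints hp (by positivity) (abs_nonneg _) h_lower h_upper
    ?_ ?_
  · calc 1 / 2 ^ (p - 2) * |x - y| ^ p ≤ |x - y| ^ p :=
          mul_le_of_le_one_left (by positivity) (div_le_one_of_le₀ two_rpow_ge_one (by positivity))
      _ ≤ (x ^ (p - 1) - y ^ (p - 1)) * (x - y) := by
          simpa only [sub_add_cancel] using abs_sub_rpow_add_one_le hr hx hy
      _ = _ := by rw [rpow_sub_one hx, rpow_sub_one hy, sq_abs]; ring
  · calc 1 / 2 ^ (p - 2) * (x + y) ^ p ≤ (x ^ (p - 1) + y ^ (p - 1)) * (x + y) := by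
          rw [one_div_mul_eq_div, div_le_iff₀' (by positivity)]
          simpa only [sub_add_cancel, sub_sub, one_add_one_eq_two] using
            add_rpow_add_one_le hr hx hy
      _ = _ := by rw [rpow_sub_one hx, rpow_sub_one hy]; ring

end ScalarInequalities

section InnerProduct

open scoped RealInnerProductSpace

variable {H : Type*} [SeminormedAddCommGroup H] [InnerProductSpace ℝ H]

lemma inner_smul_sub_smul_sub (α β : ℝ) (a b : H) :
    ⟪α • a - β • b, a - b⟫
      = (α + β) / 2 * ‖a - b‖ ^ 2 + (α - β) * (‖a‖ ^ 2 - ‖b‖ ^ 2) / 2 := by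
  rw [norm_sub_sq_real]
  simp only [inner_sub_left, inner_sub_right, real_inner_smul_left,
    real_inner_self_eq_norm_sq, real_inner_comm a b]
  ring

/-- The constant `1 / 2 ^ (p - 2)` is optimal: equality holds for `b = -a`. -/
theorem stmt_11_general {p : ℝ} (hp : 2 ≤ p) (a b : H) :
    1 / 2 ^ (p - 2) * ‖a - b‖ ^ p
      ≤ ⟪‖a‖ ^ (p - 2) • a - ‖b‖ ^ (p - 2) • b, a - b⟫ := by
  rw [inner_smul_sub_smul_sub]
  exact mul_rpow_le_of_abs_sub_le_of_le_add hp (norm_nonneg a) (norm_nonneg b)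
    (abs_norm_sub_norm_le a b) (norm_sub_le a b)

end InnerProduct

open scoped RealInnerProductSpace in
/-- the vector inequality
`⟨‖a‖^{p−2}a − ‖b‖^{p−2}b, a − b⟩ ≥ ‖a − b‖^p / (2^{p−2} p)`. -/
theorem stmt_11 (p : ℝ) (hp : 2 ≤ p) {H : Type*} [NormedAddCommGroup H]
    [InnerProductSpace ℝ H] (a b : H) :
    ⟪‖a‖ ^ (p - 2) • a - ‖b‖ ^ (p - 2) • b, a - b⟫
      ≥ (1 / (2 ^ (p - 2) * p)) * ‖a - b‖ ^ p := by
  refine le_trans ?_ (stmt_11_general hp a b)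
  gcongr
  exact le_mul_of_one_le_right (by positivity) (by linarith)

end FSG
end
end

section
/- For every real p ≥ 2, every t ∈ (0,1) and every m ∈ [−1,1], (1 + t^p − (t^{p−1} + t)m) / (1 + t² − 2tm)^{p/2} ≥ 1/(2^{p−2} p). (Note 1 + t² − 2tm ≥ (1−t)² > 0, so the quotient is well defined.) -/
open Filter
open scoped BigOperators

noncomputable section

namespace FSG

variable {V : Type*}

/-! For `x`, `y` in an inner product space with `‖x‖ = a`, `‖y‖ = b` and `⟪x, y⟫ = a * b * m`, the
inequality `sq_add_sq_sub_rpow_half_le` reads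
`‖x - y‖ ^ p ≤ 2 ^ (p - 2) * ⟪‖x‖ ^ (p - 2) • x - ‖y‖ ^ (p - 2) • y, x - y⟫`.
Its left-hand side is convex in `m` and its right-hand side is affine in `m`, so only the collinear
cases `m = 1` and `m = -1` have to be checked. They follow from the superadditivity of
`x ↦ x ^ (p - 1)` and from the power mean inequality, respectively. The constant `2 ^ (p - 2)` is
attained at `a = b`, `m = -1`. -/

section

variable {p r a b m : ℝ}

theorem sub_rpow_le_rpow_sub_rpow (hr : 1 ≤ r) (hb : 0 ≤ b) (hba : b ≤ a) :
    (a - b) ^ r ≤ a ^ r - b ^ r := by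
  have h := Real.add_rpow_le_rpow_add (sub_nonneg.2 hba) hb hr
  rw [sub_add_cancel] at h
  exact le_sub_iff_add_le.2 h

theorem add_rpow_le_two_rpow_mul_rpow_add_rpow (hr : 1 ≤ r) (ha : 0 ≤ a) (hb : 0 ≤ b) :
    (a + b) ^ r ≤ 2 ^ (r - 1) * (a ^ r + b ^ r) := by
  lift a to NNReal using ha
  lift b to NNReal using hb
  exact_mod_cast NNReal.rpow_add_le_mul_rpow_add_rpow a b hr

theorem rpow_sub_one_mul_self (ha : 0 ≤ a) (hp : p ≠ 0) : a ^ (p - 1) * a = a ^ p := by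
  rw [← Real.rpow_add_one' ha (by simpa using hp), sub_add_cancel]

theorem sq_rpow_half (a p : ℝ) : (a ^ 2) ^ (p / 2) = |a| ^ p := by
  rw [Real.rpow_div_two_eq_sqrt p (sq_nonneg a), Real.sqrt_sq_eq_abs]

theorem abs_sub_rpow_le (hp : 2 ≤ p) (ha : 0 ≤ a) (hb : 0 ≤ b) :
    |a - b| ^ p ≤ (a ^ (p - 1) - b ^ (p - 1)) * (a - b) := by
  wlog hba : b ≤ a generalizing a b
  · rw [abs_sub_comm, ← neg_mul_neg, neg_sub, neg_sub]
    exact this hb ha (le_of_not_ge hba)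
  have hab : 0 ≤ a - b := sub_nonneg.2 hba
  calc |a - b| ^ p = (a - b) ^ (p - 1) * (a - b) := by
        rw [abs_of_nonneg hab, rpow_sub_one_mul_self hab (by linarith)]
    _ ≤ (a ^ (p - 1) - b ^ (p - 1)) * (a - b) := by
        gcongr
        exact sub_rpow_le_rpow_sub_rpow (by linarith) hb hba

theorem abs_add_rpow_le (hp : 2 ≤ p) (ha : 0 ≤ a) (hb : 0 ≤ b) :
    |a + b| ^ p ≤ 2 ^ (p - 2) * ((a ^ (p - 1) + b ^ (p - 1)) * (a + b)) := by
  have hab : 0 ≤ a + b := add_nonneg ha hb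
  calc |a + b| ^ p = (a + b) ^ (p - 1) * (a + b) := by
        rw [abs_of_nonneg hab, rpow_sub_one_mul_self hab (by linarith)]
    _ ≤ 2 ^ (p - 1 - 1) * (a ^ (p - 1) + b ^ (p - 1)) * (a + b) := by
        gcongr
        exact add_rpow_le_two_rpow_mul_rpow_add_rpow (by linarith) ha hb
    _ = 2 ^ (p - 2) * ((a ^ (p - 1) + b ^ (p - 1)) * (a + b)) := by
        rw [sub_sub, one_add_one_eq_two, mul_assoc]

theorem sq_add_sq_sub_rpow_half_le_convex_combination (hp : 2 ≤ p)
    (hm : m ∈ Set.Icc (-1 : ℝ) 1) :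
    (a ^ 2 + b ^ 2 - 2 * a * b * m) ^ (p / 2) ≤
      (1 - m) / 2 * |a + b| ^ p + (1 + m) / 2 * |a - b| ^ p := by
  have h_weight_add : 0 ≤ (1 - m) / 2 := by linarith [hm.2]
  have h_weight_sub : 0 ≤ (1 + m) / 2 := by linarith [hm.1]
  calc (a ^ 2 + b ^ 2 - 2 * a * b * m) ^ (p / 2)
      = ((1 - m) / 2 * (a + b) ^ 2 + (1 + m) / 2 * (a - b) ^ 2) ^ (p / 2) := by
        congr 1
        ring
    _ ≤ (1 - m) / 2 * ((a + b) ^ 2) ^ (p / 2) + (1 + m) / 2 * ((a - b) ^ 2) ^ (p / 2) :=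
        (convexOn_rpow (by linarith)).2 (sq_nonneg (a + b)) (sq_nonneg (a - b))
          h_weight_add h_weight_sub (by ring)
    _ = (1 - m) / 2 * |a + b| ^ p + (1 + m) / 2 * |a - b| ^ p := by
        rw [sq_rpow_half, sq_rpow_half]

theorem sq_add_sq_sub_rpow_half_le (hp : 2 ≤ p) (ha : 0 ≤ a) (hb : 0 ≤ b)
    (hm : m ∈ Set.Icc (-1 : ℝ) 1) :
    (a ^ 2 + b ^ 2 - 2 * a * b * m) ^ (p / 2) ≤
      2 ^ (p - 2) * (a ^ p + b ^ p - (a * b ^ (p - 1) + a ^ (p - 1) * b) * m) := by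
  have h_add := abs_add_rpow_le hp ha hb
  have h_sub : |a - b| ^ p ≤ 2 ^ (p - 2) * ((a ^ (p - 1) - b ^ (p - 1)) * (a - b)) := by
    have h := abs_sub_rpow_le hp ha hb
    have h_nonneg : 0 ≤ (a ^ (p - 1) - b ^ (p - 1)) * (a - b) := le_trans (by positivity) h
    exact h.trans <| le_mul_of_one_le_left h_nonneg <|
      Real.one_le_rpow one_le_two (sub_nonneg.2 hp)
  calc (a ^ 2 + b ^ 2 - 2 * a * b * m) ^ (p / 2)
      ≤ (1 - m) / 2 * |a + b| ^ p + (1 + m) / 2 * |a - b| ^ p :=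
        sq_add_sq_sub_rpow_half_le_convex_combination hp hm
    _ ≤ (1 - m) / 2 * (2 ^ (p - 2) * ((a ^ (p - 1) + b ^ (p - 1)) * (a + b))) +
          (1 + m) / 2 * (2 ^ (p - 2) * ((a ^ (p - 1) - b ^ (p - 1)) * (a - b))) :=
        add_le_add (mul_le_mul_of_nonneg_left h_add (by linarith [hm.2]))
          (mul_le_mul_of_nonneg_left h_sub (by linarith [hm.1]))
    _ = 2 ^ (p - 2) * (a ^ p + b ^ p - (a * b ^ (p - 1) + a ^ (p - 1) * b) * m) := by
        rw [← rpow_sub_one_mul_self ha (by linarith : p ≠ 0),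
          ← rpow_sub_one_mul_self hb (by linarith : p ≠ 0)]
        ring

end

theorem stmt_12_general (p t m : ℝ) (hp : 2 ≤ p) (ht : 0 ≤ t) (hm : m ∈ Set.Icc (-1 : ℝ) 1)
    (hD : 1 + t ^ 2 - 2 * t * m ≠ 0) :
    (1 + t ^ p - (t ^ (p - 1) + t) * m) / (1 + t ^ 2 - 2 * t * m) ^ (p / 2)
      ≥ 1 / 2 ^ (p - 2) := by
  have hD_nonneg : 0 ≤ 1 + t ^ 2 - 2 * t * m := by
    linarith [sq_nonneg (1 - t), mul_le_mul_of_nonneg_left hm.2 ht]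
  have hD_pos : 0 < 1 + t ^ 2 - 2 * t * m := hD_nonneg.lt_of_ne' hD
  have h := sq_add_sq_sub_rpow_half_le hp zero_le_one ht hm
  simp only [one_pow, Real.one_rpow, one_mul, mul_one] at h
  rwa [ge_iff_le, div_le_div_iff₀ (by positivity) (Real.rpow_pos_of_pos hD_pos _), one_mul,
    mul_comm _ (2 ^ (p - 2))]

/-- the scalar inequality `φ(t,m) ≥ 1/(2^{p−2}p)`. -/
theorem stmt_12 (p t m : ℝ) (hp : 2 ≤ p) (ht : t ∈ Set.Ioo (0:ℝ) 1)
    (hm : m ∈ Set.Icc (-1 : ℝ) 1) :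
    (1 + t ^ p - (t ^ (p - 1) + t) * m) / (1 + t ^ 2 - 2 * t * m) ^ (p / 2)
      ≥ 1 / (2 ^ (p - 2) * p) := by
  have hD : 0 < 1 + t ^ 2 - 2 * t * m := by
    linarith [pow_pos (sub_pos.2 ht.2) 2, mul_le_mul_of_nonneg_left hm.2 ht.1.le]
  calc 1 / (2 ^ (p - 2) * p) ≤ 1 / 2 ^ (p - 2) := by
        gcongr
        exact le_mul_of_one_le_right (by positivity) (by linarith)
    _ ≤ _ := stmt_12_general p t m hp ht.1.le hm hD.ne'

end FSG
end
end
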